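/- Let M = cQ + εD ∈ 𝔻ℍ[t] be a bounded monic reduced motion polynomial with c ∈ ℝ[t], Q, D ∈ ℍ[t], and mrpf(Q) = 1. Let g ∈ ℝ[t] be the greatest common monic real polynomial divisor of c, Q*·D, and D·Q*. If c·g divides D·D* in ℝ[t], then M admits a factorization into monic linear motion polynomial factors. -/

import Mathlib

open Polynomial DualNumber TrivSqZeroExt

noncomputable section

/-- The real quaternions. -/
abbrev Hq : Type := Quaternion ℝ

/-- The dual quaternions. -/
abbrev DHq : Type := DualNumber Hq

/-- Conjugation of a dual quaternion: `(p + ε d)* = p* + ε d*`. -/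
instance : Star DHq := ⟨fun x => inl (star x.fst) + inr (star x.snd)⟩

/-- Coefficient-wise (quaternion) conjugation of a polynomial. -/
def cstar {R : Type*} [Semiring R] [Star R] (A : R[X]) : R[X] :=
  A.sum fun n a => Polynomial.C (star a) * Polynomial.X ^ n

/-- The embedding `ℝ[t] → ℍ[t]`. -/
def qPoly (f : ℝ[X]) : Hq[X] := f.map (algebraMap ℝ Hq)

/-- The embedding `ℍ[t] → 𝔻ℍ[t]` (primal part). -/
def dhQ (P : Hq[X]) : DHq[X] := P.map (inlHom Hq Hq)

/-- The embedding `ℝ[t] → 𝔻ℍ[t]`. -/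
def dPoly (f : ℝ[X]) : DHq[X] := dhQ (qPoly f)

/-- The dual quaternion polynomial `P + ε D` with primal part `P` and dual part `D`. -/
def mp (P D : Hq[X]) : DHq[X] := dhQ P + Polynomial.C ε * dhQ D

/-- The primal part of a dual quaternion polynomial. -/
def primal (A : DHq[X]) : Hq[X] := A.map (fstHom ℝ Hq Hq).toRingHom

/-- A motion polynomial: a dual quaternion polynomial whose norm polynomial
`ν(M) = M·M*` is a nonzero real polynomial. -/
def IsMotion (M : DHq[X]) : Prop := ∃ f : ℝ[X], f ≠ 0 ∧ M * cstar M = dPoly f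

/-- A real polynomial divides a quaternion polynomial. -/
def RDvdQ (f : ℝ[X]) (A : Hq[X]) : Prop := ∃ B : Hq[X], A = qPoly f * B

/-- A real polynomial divides a dual quaternion polynomial. -/
def RDvdD (f : ℝ[X]) (A : DHq[X]) : Prop := ∃ B : DHq[X], A = dPoly f * B

/-- `g` is the greatest common monic real polynomial divisor of a quaternion polynomial `A`
(with itself), i.e. `g = mrpf A`. -/
def IsMrpfQ (g : ℝ[X]) (A : Hq[X]) : Prop :=
  g.Monic ∧ RDvdQ g A ∧ ∀ f : ℝ[X], f.Monic → RDvdQ f A → f ∣ g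

/-- `g` is the greatest common monic real polynomial divisor of `c ∈ ℝ[t]` and a quaternion
polynomial `A`, i.e. `g = mrpf(c, A)`. -/
def IsMrpf2 (g : ℝ[X]) (c : ℝ[X]) (A : Hq[X]) : Prop :=
  g.Monic ∧ g ∣ c ∧ RDvdQ g A ∧
    ∀ f : ℝ[X], f.Monic → f ∣ c → RDvdQ f A → f ∣ g

/-- `g` is the greatest common monic real polynomial divisor of `c ∈ ℝ[t]` and two quaternion
polynomials `A` and `B`, i.e. `g = mrpf(c, A, B)`. -/
def IsMrpf3 (g : ℝ[X]) (c : ℝ[X]) (A B : Hq[X]) : Prop :=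
  g.Monic ∧ g ∣ c ∧ RDvdQ g A ∧ RDvdQ g B ∧
    ∀ f : ℝ[X], f.Monic → f ∣ c → RDvdQ f A → RDvdQ f B → f ∣ g

/-- A quaternion polynomial is reduced: `mrpf = 1`, i.e. it has only constant real
polynomial factors. -/
def ReducedQ (A : Hq[X]) : Prop := ∀ f : ℝ[X], f.Monic → RDvdQ f A → f = 1

/-- A dual quaternion polynomial is reduced: `mrpf = 1`. -/
def ReducedD (A : DHq[X]) : Prop := ∀ f : ℝ[X], f.Monic → RDvdD f A → f = 1

/-- Boundedness of a (monic reduced) motion polynomial: `mrpf` of its primal part has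
no real root, equivalently no linear real polynomial `t - a` divides the primal part. -/
def BoundedD (M : DHq[X]) : Prop :=
  ∀ a : ℝ, ¬ RDvdQ (Polynomial.X - Polynomial.C a) (primal M)

/-- A generic motion polynomial: monic, a motion polynomial, with `mrpf` of the primal
part equal to `1`. -/
def GenericD (M : DHq[X]) : Prop :=
  M.Monic ∧ IsMotion M ∧ ReducedQ (primal M)

/-- The monic linear dual quaternion polynomial `t - p - ε d`. -/
def lin (p d : Hq) : DHq[X] := mp (Polynomial.X - Polynomial.C p) (-Polynomial.C d)

/-- `M` admits a factorization into monic linear motion polynomial factors. -/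
def HasLinFact (M : DHq[X]) : Prop :=
  ∃ L : List DHq, (∀ h ∈ L, IsMotion (Polynomial.X - Polynomial.C h)) ∧
    M = (L.map fun h => Polynomial.X - Polynomial.C h).prod

end


noncomputable section

/-- quaternions over the polynomial ring -/
abbrev HX : Type := Quaternion ℝ[X]

/-- constructor -/
def mk4 (a b c d : ℝ[X]) : HX := ⟨a, b, c, d⟩

@[simp] theorem mk4_re (a b c d : ℝ[X]) : (mk4 a b c d).re = a := rfl
@[simp] theorem mk4_imI (a b c d : ℝ[X]) : (mk4 a b c d).imI = b := rfl
@[simp] theorem mk4_imJ (a b c d : ℝ[X]) : (mk4 a b c d).imJ = c := rfl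
@[simp] theorem mk4_imK (a b c d : ℝ[X]) : (mk4 a b c d).imK = d := rfl
@[simp] theorem one_reX : (1 : HX).re = 1 := rfl
@[simp] theorem one_imIX : (1 : HX).imI = 0 := rfl
@[simp] theorem one_imJX : (1 : HX).imJ = 0 := rfl
@[simp] theorem one_imKX : (1 : HX).imK = 0 := rfl

theorem smulmul (r : ℝ[X]) (a b : HX) : (r • a) * b = r • (a * b) := by
  ext1 <;> simp <;> ring

theorem mulsmul (r : ℝ[X]) (a b : HX) : a * (r • b) = r • (a * b) := by
  ext1 <;> simp <;> ring

theorem starsmul (r : ℝ[X]) (a : HX) : star (r • a) = r • star a := by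
  ext1 <;> simp

/-- norm -/
def nu (A : HX) : ℝ[X] := A.re ^ 2 + A.imI ^ 2 + A.imJ ^ 2 + A.imK ^ 2

theorem nu_mul (A B : HX) : nu (A * B) = nu A * nu B := by
  simp [nu]; ring

theorem nu_star (A : HX) : nu (star A) = nu A := by
  simp [nu]

/-- divisibility by a real polynomial -/
def dv (F : ℝ[X]) (A : HX) : Prop := ∃ B : HX, A = F • B

theorem dv_iff (F : ℝ[X]) (A : HX) :
    dv F A ↔ F ∣ A.re ∧ F ∣ A.imI ∧ F ∣ A.imJ ∧ F ∣ A.imK := by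
  constructor
  · rintro ⟨B, rfl⟩
    exact ⟨⟨B.re, by simp⟩, ⟨B.imI, by simp⟩, ⟨B.imJ, by simp⟩, ⟨B.imK, by simp⟩⟩
  · rintro ⟨⟨a, ha⟩, ⟨b, hb⟩, ⟨c, hc⟩, ⟨d, hd⟩⟩
    refine ⟨mk4 a b c d, ?_⟩
    ext1 <;> simp [*]

theorem dv_add {F : ℝ[X]} {A B : HX} (hA : dv F A) (hB : dv F B) : dv F (A + B) := by
  rw [dv_iff] at *
  simp only [Quaternion.re_add, Quaternion.imI_add, Quaternion.imJ_add, Quaternion.imK_add]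
  exact ⟨dvd_add hA.1 hB.1, dvd_add hA.2.1 hB.2.1, dvd_add hA.2.2.1 hB.2.2.1,
    dvd_add hA.2.2.2 hB.2.2.2⟩

theorem dv_neg {F : ℝ[X]} {A : HX} (hA : dv F A) : dv F (-A) := by
  obtain ⟨B, rfl⟩ := hA
  exact ⟨-B, by simp⟩

theorem dv_sub {F : ℝ[X]} {A B : HX} (hA : dv F A) (hB : dv F B) : dv F (A - B) := by
  rw [sub_eq_add_neg]; exact dv_add hA (dv_neg hB)

theorem dv_star {F : ℝ[X]} {A : HX} (hA : dv F A) : dv F (star A) := by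
  obtain ⟨B, rfl⟩ := hA
  exact ⟨star B, by ext1 <;> simp⟩

theorem dv_mulr {F : ℝ[X]} {A : HX} (hA : dv F A) (B : HX) : dv F (A * B) := by
  obtain ⟨A, rfl⟩ := hA
  exact ⟨A * B, by rw [smulmul]⟩

theorem dv_mull {F : ℝ[X]} {A : HX} (hA : dv F A) (B : HX) : dv F (B * A) := by
  obtain ⟨A, rfl⟩ := hA
  exact ⟨B * A, by rw [mulsmul]⟩

theorem dv_smul {F G : ℝ[X]} (h : F ∣ G) (B : HX) : dv F (G • B) := by
  obtain ⟨A, rfl⟩ := h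
  exact ⟨A • B, by rw [mul_smul]⟩

theorem dv_trans {F G : ℝ[X]} (h : F ∣ G) {B : HX} (hB : dv G B) : dv F B := by
  obtain ⟨A, rfl⟩ := hB
  exact dv_smul h A

theorem dv_smul' {F : ℝ[X]} (G : ℝ[X]) {B : HX} (h : dv F B) : dv F (G • B) := by
  obtain ⟨A, rfl⟩ := h
  exact ⟨G • A, by rw [smul_comm]⟩

theorem dv_re {F : ℝ[X]} {B : HX} (h : dv F B) : F ∣ B.re := ((dv_iff _ _).1 h).1

theorem dv_nu {F : ℝ[X]} {B : HX} (h : dv F B) : F ∣ nu B := by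
  rw [dv_iff] at h
  unfold nu
  refine dvd_add (dvd_add (dvd_add ?_ ?_) ?_) ?_ <;> refine dvd_pow ?_ two_ne_zero
  exacts [h.1, h.2.1, h.2.2.1, h.2.2.2]

theorem dv_cancel {N r : ℝ[X]} (hN : Prime N) (hr : ¬ N ∣ r) {k : ℕ} {A : HX}
    (h : dv (N ^ k) (r • A)) : dv (N ^ k) A := by
  rw [dv_iff] at *
  simp only [Quaternion.re_smul, Quaternion.imI_smul, Quaternion.imJ_smul, Quaternion.imK_smul, smul_eq_mul] at h
  exact ⟨hN.pow_dvd_of_dvd_mul_left k hr h.1, hN.pow_dvd_of_dvd_mul_left k hr h.2.1,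
    hN.pow_dvd_of_dvd_mul_left k hr h.2.2.1, hN.pow_dvd_of_dvd_mul_left k hr h.2.2.2⟩

theorem dv_cancel1 {N r : ℝ[X]} (hN : Prime N) (hr : ¬ N ∣ r) {A : HX}
    (h : dv N (r • A)) : dv N A := by
  have := dv_cancel (k := 1) hN hr (A := A) (by simpa using h)
  simpa using this

theorem dv_mul_smul {F G : ℝ[X]} (hG : G ≠ 0) {A : HX}  :
    dv (G * F) (G • A) ↔ dv F A := by
  rw [dv_iff, dv_iff]
  simp [mul_dvd_mul_iff_left hG]

theorem smul_inj' {G : ℝ[X]} (hG : G ≠ 0) {A B : HX} (h : G • A = G • B) : A = B := by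
  rw [Quaternion.ext_iff] at *
  simpa [hG] using h

/-- constants -/
def io (p : Hq) : HX := ⟨C p.re, C p.imI, C p.imJ, C p.imK⟩

/-- linear factor -/
def Tp (p : Hq) : HX := ⟨X - C p.re, - C p.imI, - C p.imJ, - C p.imK⟩

/-- orthogonality -/
def orth (p d : Hq) : Prop := d.re = 0 ∧ p.imI * d.imI + p.imJ * d.imJ + p.imK * d.imK = 0

@[simp] theorem io_re (p : Hq) : (io p).re = C p.re := rfl
@[simp] theorem io_imI (p : Hq) : (io p).imI = C p.imI := rfl
@[simp] theorem io_imJ (p : Hq) : (io p).imJ = C p.imJ := rfl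
@[simp] theorem io_imK (p : Hq) : (io p).imK = C p.imK := rfl
@[simp] theorem Tp_re (p : Hq) : (Tp p).re = X - C p.re := rfl
@[simp] theorem Tp_imI (p : Hq) : (Tp p).imI = - C p.imI := rfl
@[simp] theorem Tp_imJ (p : Hq) : (Tp p).imJ = - C p.imJ := rfl
@[simp] theorem Tp_imK (p : Hq) : (Tp p).imK = - C p.imK := rfl

theorem io_mul (a b : Hq) : io (a * b) = io a * io b := by
  ext1 <;> simp

theorem io_star (a : Hq) : star (io a) = io (star a) := by
  ext1 <;> simp

theorem Tp_star (a : Hq) : star (Tp a) = Tp (star a) := by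
  ext1 <;> simp

theorem io_add (a b : Hq) : io (a + b) = io a + io b := by
  ext1 <;> simp

theorem io_neg (a : Hq) : io (-a) = -io a := by
  ext1 <;> simp

theorem Tp_eq (a : Hq) : Tp a = (X : ℝ[X]) • (1 : HX) - io a := by
  ext1 <;> simp

theorem mul_star_nu (A : HX) : A * star A = nu A • (1 : HX) := by
  ext1 <;> simp [nu] <;> ring

theorem star_mul_nu (A : HX) : star A * A = nu A • (1 : HX) := by
  ext1 <;> simp [nu] <;> ring

theorem orthC {p d : Hq} (h : orth p d) :
    (C p.imI * C d.imI + C p.imJ * C d.imJ + C p.imK * C d.imK : ℝ[X]) = 0 := by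
  rw [← C_mul, ← C_mul, ← C_mul, ← C_add, ← C_add, h.2, C_0]

theorem orth_comm {p d : Hq} (h : orth p d) : star (Tp p) * io d = io d * Tp p := by
  have h2 := orthC h
  ext1 <;> simp [h.1]
  · linear_combination -2 * h2
  all_goals ring

theorem orth_comm' {p d : Hq} (h : orth p d) : io d * star (Tp p) = Tp p * io d := by
  have h2 := orthC h
  ext1 <;> simp [h.1]
  · linear_combination -2 * h2
  all_goals ring

theorem orth_star {p d : Hq} (h : orth p d) : star (io d) = - io d := by
  ext1 <;> simp [h.1]

theorem re_comm (A B : HX) : (A * B).re = (B * A).re := by simp; ring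

theorem re_star_mul (A B : HX) : (A * star B).re = (B * star A).re := by simp; ring

theorem re_conj (A B : HX) : (A * B * star A).re = nu A * B.re := by
  simp [nu]; ring

theorem nu_add (A B : HX) : nu (A + B) = nu A + 2 * (A * star B).re + nu B := by
  simp [nu]; ring

theorem nu_smul (r : ℝ[X]) (A : HX) : nu (r • A) = r ^ 2 * nu A := by
  simp [nu]; ring

/-- the key identity -/
theorem key_id (T Q Z : HX) :
    T * (Z * Q) + star Q * star (T * Z) = (2 * (Q * T * Z).re) • (1 : HX) := by
  ext1 <;> simp <;> ring

theorem exists_Z {N : ℝ[X]} {A : HX} (h : ¬ dv N A) : ∃ Z : HX, ¬ N ∣ (A * Z).re := by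
  by_contra! hc
  apply h
  rw [dv_iff]
  have h1 := hc (mk4 1 0 0 0)
  have h2 := hc (mk4 0 1 0 0)
  have h3 := hc (mk4 0 0 1 0)
  have h4 := hc (mk4 0 0 0 1)
  simp at h1 h2 h3 h4
  exact ⟨h1, h2, h3, h4⟩

theorem not_dvd_two_mul {N r : ℝ[X]} (h : ¬ N ∣ r) : ¬ N ∣ 2 * r := by
  intro h2
  apply h
  have : r = C (1/2 : ℝ) * (2 * r) := by
    rw [← mul_assoc, show (2 : ℝ[X]) = C 2 from rfl, ← C_mul]; norm_num
  rw [this]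
  exact Dvd.dvd.mul_left h2 _

/-- If `E T` and `E Q₁*` vanish mod `N^k` and `Q₁T` is nonzero mod `N` then `E` vanishes. -/
theorem key_dv {N : ℝ[X]} (hN : Prime N) {k : ℕ} {E T Q : HX} (h1 : dv (N ^ k) (E * T))
    (h2 : dv (N ^ k) (E * star Q)) (h3 : ¬ dv N (Q * T)) : dv (N ^ k) E := by
  obtain ⟨Z, hZ⟩ := exists_Z h3
  apply dv_cancel hN (not_dvd_two_mul hZ)
  have : (2 * (Q * T * Z).re) • E = E * T * (Z * Q) + E * star Q * star (T * Z) := by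
    rw [mul_assoc E, mul_assoc E, ← mul_add, key_id, mulsmul, mul_one]
  rw [this]
  exact dv_add (dv_mulr h1 _) (dv_mulr h2 _)


theorem staradd (a b : HX) : star (a + b) = star a + star b := by
  ext1 <;> simp <;> ring

theorem nu_Tp (p : Hq) : nu (Tp p) = X ^ 2 + (C (-2 * p.re) * X +
    C (p.re ^ 2 + p.imI ^ 2 + p.imJ ^ 2 + p.imK ^ 2)) := by
  simp only [nu, Tp_re, Tp_imI, Tp_imJ, Tp_imK, C_mul, C_add, C_pow, C_neg]
  rw [show (C 2 : ℝ[X]) = 2 from rfl]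
  ring

theorem nu_Tp_natDegree (p : Hq) : (nu (Tp p)).natDegree = 2 := by
  rw [nu_Tp]; compute_degree!

theorem nu_Tp_monic (p : Hq) : (nu (Tp p)).Monic := by
  rw [nu_Tp]; monicity!

theorem poly_rem {N : ℝ[X]} (hN : N.Monic) (h2 : N.natDegree = 2) (f : ℝ[X]) :
    ∃ u : ℝ[X], ∃ a b : ℝ, f = N * u + (X * C a + C b) := by
  have h1 : (f %ₘ N).natDegree ≤ 1 := by
    have := natDegree_modByMonic_lt f hN (by rintro rfl; simp at h2)
    omega
  obtain ⟨a, b, h⟩ := exists_eq_X_add_C_of_natDegree_le_one h1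
  refine ⟨f /ₘ N, a, b, ?_⟩
  conv_lhs => rw [← modByMonic_add_div f N, h]
  ring

theorem quat_rem {N : ℝ[X]} (hN : N.Monic) (h2 : N.natDegree = 2) (A : HX) :
    ∃ U : HX, ∃ r1 r0 : Hq, A = N • U + ((X : ℝ[X]) • io r1 + io r0) := by
  obtain ⟨u1, a1, b1, h1⟩ := poly_rem hN h2 A.re
  obtain ⟨u2, a2, b2, h2'⟩ := poly_rem hN h2 A.imI
  obtain ⟨u3, a3, b3, h3⟩ := poly_rem hN h2 A.imJ
  obtain ⟨u4, a4, b4, h4⟩ := poly_rem hN h2 A.imK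
  refine ⟨mk4 u1 u2 u3 u4, ⟨a1, a2, a3, a4⟩, ⟨b1, b2, b3, b4⟩, ?_⟩
  ext1 <;> simp only [Quaternion.re_add, Quaternion.imI_add, Quaternion.imJ_add,
    Quaternion.imK_add, Quaternion.re_smul, Quaternion.imI_smul, Quaternion.imJ_smul,
    Quaternion.imK_smul, mk4_re, mk4_imI, mk4_imJ, mk4_imK,
    smul_eq_mul]
  exacts [h1, h2', h3, h4]

theorem io_zero : io 0 = 0 := by ext1 <;> exact C_0

theorem nu_io (a : Hq) : nu (io a) = C (Quaternion.normSq a) := by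
  simp [nu, Quaternion.normSq_def']

theorem lin_fac {N : ℝ[X]} (hN : N.Monic) (h2 : N.natDegree = 2) {A : HX}
    (hA : ¬ dv N A) (hn : N ∣ nu A) :
    ∃ U : HX, ∃ r p : Hq, r ≠ 0 ∧ nu (Tp p) = N ∧ A = N • U + io r * Tp p := by
  obtain ⟨U, r1, r0, h⟩ := quat_rem hN h2 A
  have hR : N ∣ nu ((X : ℝ[X]) • io r1 + io r0) := by
    rw [h, nu_add] at hn
    have h3 : N ∣ nu (N • U) + 2 * (N • U * star ((X : ℝ[X]) • io r1 + io r0)).re := by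
      apply dvd_add
      · exact dv_nu ⟨U, rfl⟩
      · apply Dvd.dvd.mul_left
        exact dv_re (dv_mulr ⟨U, rfl⟩ _)
    exact (dvd_add_right h3).1 hn
  by_cases hr : r1 = 0
  · exfalso
    subst hr
    rw [io_zero, smul_zero, zero_add, nu_io] at hR
    have h0 : Quaternion.normSq r0 = 0 := by
      by_contra hne
      have := natDegree_le_of_dvd hR (by simpa using hne)
      simp [h2] at this
    rw [Quaternion.normSq_eq_zero] at h0
    apply hA
    rw [h, h0, io_zero]
    exact ⟨U, by simp⟩
  · have e : (X : ℝ[X]) • io r1 + io r0 = io r1 * Tp (-(r1⁻¹ * r0)) := by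
      rw [Tp_eq, mul_sub, mulsmul, mul_one, ← io_mul, mul_neg, ← mul_assoc,
        mul_inv_cancel₀ hr, one_mul, io_neg, sub_neg_eq_add]
    refine ⟨U, r1, -(r1⁻¹ * r0), hr, ?_, ?_⟩
    · rw [e, nu_mul, nu_io] at hR
      have hu : IsUnit (C (Quaternion.normSq r1)) := by
        rw [Polynomial.isUnit_C, isUnit_iff_ne_zero]
        simpa using hr
      rw [hu.dvd_mul_left] at hR
      exact eq_of_monic_of_dvd_of_natDegree_le hN (nu_Tp_monic _) hR
        (by rw [nu_Tp_natDegree, h2])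
    · rw [h, e]

theorem T_star (p : Hq) (A : HX) : A * Tp p * star (Tp p) = nu (Tp p) • A := by
  rw [mul_assoc, mul_star_nu, mulsmul, mul_one]

theorem star_T (p : Hq) (A : HX) : A * star (Tp p) * Tp p = nu (Tp p) • A := by
  rw [mul_assoc, star_mul_nu, mulsmul, mul_one]

/-- local condition -/
def W (N c : ℝ[X]) (Q D : HX) : Prop := ∃ a b : ℕ, ∃ c0 : ℝ[X], c = N ^ a * c0 ∧ ¬ N ∣ c0 ∧
  b ≤ a ∧ N ^ (a + b) ∣ nu D ∧
  (b < a → ¬ (dv (N ^ (b + 1)) (star Q * D) ∧ dv (N ^ (b + 1)) (D * star Q)))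

theorem dv_one (A : HX) : dv 1 A := ⟨A, by simp⟩

theorem W_strong {N c : ℝ[X]} {Q D : HX} (h : W N c Q D) :
    ∃ a b : ℕ, ∃ c0 : ℝ[X], c = N ^ a * c0 ∧ ¬ N ∣ c0 ∧
    b ≤ a ∧ N ^ (a + b) ∣ nu D ∧ dv (N ^ b) (star Q * D) ∧ dv (N ^ b) (D * star Q) ∧
    (b < a → ¬ (dv (N ^ (b + 1)) (star Q * D) ∧ dv (N ^ (b + 1)) (D * star Q))) := by
  obtain ⟨a, b, c0, h1, h2, h3, h4, h5⟩ := h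
  induction b with
  | zero => exact ⟨a, 0, c0, h1, h2, h3, h4, by simpa using dv_one _, by simpa using dv_one _, h5⟩
  | succ b ih =>
    by_cases hb : dv (N ^ (b + 1)) (star Q * D) ∧ dv (N ^ (b + 1)) (D * star Q)
    · exact ⟨a, b + 1, c0, h1, h2, h3, h4, hb.1, hb.2, h5⟩
    · exact ih (by omega) ((pow_dvd_pow _ (by omega)).trans h4) (fun _ => hb)

/-- induction state -/
structure St (c : ℝ[X]) (Q D : HX) : Prop where
  noroot : ∀ a : ℝ, ¬ (X - C a) ∣ c
  qred : ∀ F : ℝ[X], Irreducible F → ¬ dv F Q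
  mred : ∀ F : ℝ[X], Irreducible F → F ∣ c → ¬ dv F D
  mot : (Q * star D).re = 0
  cond : ∀ N : ℝ[X], N.Monic → Irreducible N → W N c Q D

theorem W_star {N c : ℝ[X]} {Q D : HX} (h : W N c Q D) : W N c (star Q) (star D) := by
  obtain ⟨a, b, c0, h1, h2, h3, h4, h5⟩ := h
  refine ⟨a, b, c0, h1, h2, h3, by rwa [nu_star], fun hb hh => h5 hb ⟨?_, ?_⟩⟩
  · have := dv_star hh.2
    simpa using this
  · have := dv_star hh.1
    simpa using this

theorem dv_star' {F : ℝ[X]} {A : HX} (hA : dv F (star A)) : dv F A := by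
  simpa using dv_star hA

theorem St_star {c : ℝ[X]} {Q D : HX} (h : St c Q D) : St c (star Q) (star D) where
  noroot := h.noroot
  qred F hF h1 := h.qred F hF (dv_star' h1)
  mred F hF hc h1 := h.mred F hF hc (dv_star' h1)
  mot := by
    have := h.mot
    rw [re_star_mul] at this
    rw [star_star, re_comm, this]
  cond N h1 h2 := W_star (h.cond N h1 h2)

theorem ne_not_dvd {F N : ℝ[X]} (hF : F.Monic) (hN : N.Monic) (iF : Irreducible F)
    (iN : Irreducible N) (h : F ≠ N) : ¬ F ∣ N := fun hd =>
  h (eq_of_monic_of_associated hF hN (iF.associated_of_dvd iN hd))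

theorem stepB {c N : ℝ[X]} {Q D Q1 D1 : HX} {p d : Hq} (h : St c Q D) (hm : N.Monic)
    (hi : Irreducible N) (hT : nu (Tp p) = N) (ho : orth p d) (hQ : Q = Q1 * Tp p)
    (hD : D = D1 * Tp p - c • (Q1 * io d)) (hW : W N c Q1 D1) : St c Q1 D1 where
  noroot := h.noroot
  qred F hF h1 := h.qred F hF (by rw [hQ]; exact dv_mulr h1 _)
  mred F hF hc h1 := h.mred F hF hc (by rw [hD]; exact dv_sub (dv_mulr h1 _) (dv_smul hc _))
  mot := by
    have h1 : N * (Q1 * star D1).re = (Q * star D).re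
        + c * (Q1 * (Tp p * star (io d)) * star Q1).re := by
      have h2 : N • (Q1 * star D1) = Q * star (D1 * Tp p) := by
        rw [star_mul, ← mul_assoc, hQ, T_star, hT, smulmul]
      have h3 : D1 * Tp p = D + c • (Q1 * io d) := by rw [hD]; abel
      have h4 : N * (Q1 * star D1).re = (N • (Q1 * star D1)).re := by simp
      rw [h4, h2, h3, staradd, mul_add, Quaternion.re_add, starsmul, mulsmul, star_mul, hQ]
      simp only [mul_assoc, Quaternion.re_smul, smul_eq_mul]
    rw [h.mot, re_conj] at h1
    have h5 : (Tp p * star (io d)).re = 0 := by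
      have := orthC ho
      simp [ho.1]
      linear_combination -this
    rw [h5] at h1
    simpa [hi.ne_zero] using h1
  cond F hF iF := by
    by_cases hFN : F = N
    · rw [hFN]; exact hW
    have hnd := ne_not_dvd hF hm iF hi hFN
    have pF := iF.prime
    obtain ⟨a, b, c0, h1, h2, h3, h4, h5, h6, h7⟩ := W_strong (h.cond F hF iF)
    have hac : F ^ a ∣ c := ⟨c0, h1⟩
    refine ⟨a, b, c0, h1, h2, h3, ?_, ?_⟩
    · apply pF.pow_dvd_of_dvd_mul_left _ hnd
      have e : N * nu D1 = nu (D + c • (Q1 * io d)) := by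
        have h3 : D + c • (Q1 * io d) = D1 * Tp p := by rw [hD]; abel
        rw [h3, nu_mul, hT, mul_comm]
      rw [e, nu_add, nu_smul]
      refine dvd_add (dvd_add h4 ?_) ?_
      · apply Dvd.dvd.mul_left
        rw [starsmul, mulsmul, Quaternion.re_smul, smul_eq_mul, pow_add]
        apply mul_dvd_mul hac
        rw [star_mul, ← mul_assoc, re_comm, ← mul_assoc]
        apply dv_re
        apply dv_mulr
        apply dv_cancel pF hnd
        have e2 : N • (star Q1 * D) = Tp p * (star Q * D) := by
          rw [hQ, star_mul, ← mul_assoc, ← mul_assoc, mul_star_nu, hT, smulmul, one_mul, smulmul]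
        rw [e2]
        exact dv_mull h5 _
      · apply Dvd.dvd.mul_right
        rw [sq, pow_add]
        exact mul_dvd_mul hac ((pow_dvd_pow _ h3).trans hac)
    · intro hb hh
      have hbc : F ^ (b + 1) ∣ c := (pow_dvd_pow _ hb).trans hac
      apply h7 hb
      constructor
      · rw [hD, mul_sub, hQ, star_mul]
        refine dv_sub ?_ (dv_mull (dv_smul hbc _) _)
        rw [mul_assoc, ← mul_assoc (star Q1)]
        exact dv_mull (dv_mulr hh.1 _) _
      · rw [hD, sub_mul, hQ, star_mul]
        refine dv_sub ?_ (dv_mulr (dv_smul hbc _) _)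
        rw [← mul_assoc, T_star, smulmul]
        exact dv_smul' _ hh.2

theorem stepA {c c1 N : ℝ[X]} {Q D D1 : HX} {p : Hq} (h : St c Q D) (hm : N.Monic)
    (hi : Irreducible N) (hT : nu (Tp p) = N) (hc : c = N * c1) (hQ : ¬ dv N (Q * star (Tp p)))
    (hD : D = D1 * Tp p) (hW : W N c1 (Q * star (Tp p)) D1) : St c1 (Q * star (Tp p)) D1 where
  noroot a ha := h.noroot a (by rw [hc]; exact Dvd.dvd.mul_left ha _)
  qred F hF h1 := by
    by_cases hFN : F ∣ N
    · exact hQ (dv_trans (hF.associated_of_dvd hi hFN).symm.dvd h1)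
    · apply h.qred F hF
      apply dv_cancel1 hF.prime hFN
      rw [← hT, ← star_T]
      exact dv_mulr h1 _
  mred F hF hc1 h1 := h.mred F hF (by rw [hc]; exact Dvd.dvd.mul_left hc1 _)
    (by rw [hD]; exact dv_mulr h1 _)
  mot := by
    have := h.mot
    rw [hD, star_mul, ← mul_assoc] at this
    exact this
  cond F hF iF := by
    by_cases hFN : F = N
    · rw [hFN]; exact hW
    have hnd := ne_not_dvd hF hm iF hi hFN
    have pF := iF.prime
    obtain ⟨a, b, c0, h1, h2, h3, h4, h5⟩ := h.cond F hF iF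
    have hc1 : F ^ a ∣ c1 := by
      apply pF.pow_dvd_of_dvd_mul_left _ hnd
      rw [← hc]; exact ⟨c0, h1⟩
    obtain ⟨c2, hc2⟩ := hc1
    refine ⟨a, b, c2, hc2, ?_, h3, ?_, ?_⟩
    · intro hd
      apply h2
      have : c0 = N * c2 := by
        have hF0 : F ^ a ≠ 0 := pow_ne_zero _ iF.ne_zero
        apply mul_left_cancel₀ hF0
        rw [← h1, hc, hc2]; ring
      rw [this]; exact Dvd.dvd.mul_left hd _
    · apply pF.pow_dvd_of_dvd_mul_left _ hnd
      have e : N * nu D1 = nu D := by rw [hD, nu_mul, hT, mul_comm]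
      rwa [e]
    · intro hb hh
      apply h5 hb
      constructor
      · apply dv_cancel pF hnd
        have e : N • (star Q * D) = star (Tp p) * (star (Q * star (Tp p)) * D1) * Tp p := by
          rw [star_mul, star_star, ← mul_assoc, ← mul_assoc, star_mul_nu, hT, hD, smulmul,
            smulmul, smulmul, one_mul, mul_assoc]
        rw [e]
        exact dv_mulr (dv_mull hh.1 _) _
      · have e : D * star Q = D1 * star (Q * star (Tp p)) := by
          rw [hD, star_mul, star_star, mul_assoc]
        rw [e]; exact hh.2


theorem starneg (a : HX) : star (-a) = -star a := by
  ext1 <;> simp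

/-- splitting off a right factor -/
def Rstep (P D P' D' : HX) : Prop := ∃ p d : Hq, orth p d ∧ P = P' * Tp p ∧
  D = D' * Tp p - P' * io d

theorem natDegree_two {N : ℝ[X]} (hm : N.Monic) (hi : Irreducible N)
    (h : ∀ a : ℝ, N ≠ X - C a) : N.natDegree = 2 := by
  have h1 := hi.natDegree_le_two
  have h2 := hi.natDegree_pos
  have h3 : N.natDegree ≠ 1 := by
    intro h3
    apply h (-N.coeff 0)
    rw [C_neg, sub_neg_eq_add]
    exact hm.eq_X_add_C h3
  omega

theorem exists_orth (p : Hq) : ∃ d : Hq, d ≠ 0 ∧ orth p d := by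
  by_cases h : p.imI = 0 ∧ p.imJ = 0
  · refine ⟨⟨0, 1, 0, 0⟩, ?_, ?_⟩
    · intro h'
      have : (1 : ℝ) = 0 := congrArg QuaternionAlgebra.imI h'
      norm_num at this
    · refine ⟨rfl, ?_⟩
      change p.imI * 1 + p.imJ * 0 + p.imK * 0 = 0
      rw [h.1]; ring
  · refine ⟨⟨0, p.imJ, -p.imI, 0⟩, ?_, ?_⟩
    · intro h'
      have h1 : p.imJ = 0 := congrArg QuaternionAlgebra.imI h'
      have h2 : -p.imI = 0 := congrArg QuaternionAlgebra.imJ h'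
      exact h ⟨by linarith, h1⟩
    · refine ⟨rfl, ?_⟩
      change p.imI * p.imJ + p.imJ * (-p.imI) + p.imK * 0 = 0
      ring

theorem orth_zero (p : Hq) : orth p 0 := by
  refine ⟨rfl, ?_⟩
  change p.imI * 0 + p.imJ * 0 + p.imK * 0 = 0
  ring

theorem stepR {c N : ℝ[X]} {Q D : HX} (h : St c Q D) (hm : N.Monic)
    (hi : Irreducible N) {a b : ℕ} {c0 : ℝ[X]} (hNc : N ∣ c) (h1 : c = N ^ a * c0) (h2 : ¬ N ∣ c0)
    (h3 : b ≤ a) (h4 : N ^ (a + b) ∣ nu D) (h5 : dv (N ^ b) (star Q * D))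
    (h7 : b < a → ¬ dv (N ^ (b + 1)) (D * star Q)) :
    ∃ c' Q' D', St c' Q' D' ∧ Rstep (c • Q) D (c' • Q') D' := by
  have hN0 : N ≠ 0 := hi.ne_zero
  have pN := hi.prime
  have hdeg : N.natDegree = 2 := natDegree_two hm hi (fun r hr => h.noroot r (hr ▸ hNc))
  have ha : 1 ≤ a := by
    by_contra hlt
    have : a = 0 := by omega
    subst this
    apply h2
    simpa [h1] using hNc
  obtain ⟨a, rfl⟩ : ∃ a', a = a' + 1 := ⟨a - 1, by omega⟩
  have hnD : ¬ dv N D := h.mred N hi hNc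
  have hND : N ∣ nu D := (dvd_pow_self N (by omega)).trans h4
  obtain ⟨U, r, p, -, hT, hU⟩ := lin_fac hm hdeg hnD hND
  have hD1 : D = (U * star (Tp p) + io r) * Tp p := by
    rw [add_mul, star_T, hT, ← hU]
  clear hU
  set D1 := U * star (Tp p) + io r with hD1def
  clear_value D1
  have hnu : nu D = N * nu D1 := by rw [hD1, nu_mul, hT, mul_comm]
  have h4' : N ^ (a + b) ∣ nu D1 := by
    rw [hnu, show a + 1 + b = (a + b) + 1 by ring, pow_succ'] at h4
    exact (mul_dvd_mul_iff_left hN0).1 h4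
  set c1 := N ^ a * c0 with hc1
  have hcc : c = N * c1 := by rw [h1, hc1]; ring
  by_cases hA : dv N (Q * star (Tp p))
  · -- case B
    obtain ⟨Q1, hQ1⟩ := hA
    have hQ : Q = Q1 * Tp p := by
      apply smul_inj' hN0
      rw [← smulmul, ← hQ1, star_T, hT]
    have hDQ : D * star Q = N • (D1 * star Q1) := by
      rw [hD1, hQ, star_mul, ← mul_assoc, T_star, hT, smulmul]
    have hb : 1 ≤ b := by
      by_contra hb
      have hb0 : b = 0 := by omega
      subst hb0
      apply h7 (by omega)
      rw [hDQ]
      exact dv_smul (by simp) _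
    obtain ⟨b, rfl⟩ : ∃ b', b = b' + 1 := ⟨b - 1, by omega⟩
    have hfin : ∀ d : Hq, ∀ D2 : HX, orth p d → D = D2 * Tp p - c • (Q1 * io d) →
        W N c Q1 D2 → ∃ c' Q' D', St c' Q' D' ∧ Rstep (c • Q) D (c' • Q') D' := by
      intro d D2 ho hD2 hW
      refine ⟨c, Q1, D2, stepB h hm hi hT ho hQ hD2 hW, p, d, ho, ?_, ?_⟩
      · rw [hQ, smulmul]
      · rw [smulmul]; exact hD2
    by_cases hB : dv (N ^ (b + 1 + 1)) (D * star Q)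
    · have hba : b = a := by
        by_contra hne
        exact h7 (by omega) hB
      subst hba
      obtain ⟨d, hd0, ho⟩ := exists_orth p
      have hB' : dv (N ^ (b + 1)) (D1 * star Q1) := by
        rw [hDQ, pow_succ' N (b + 1), dv_mul_smul hN0] at hB
        exact hB
      have hnQ : ¬ dv N (Q1 * Tp p) := hQ ▸ h.qred N hi
      refine hfin d (D1 + c1 • (Q * io d)) ho ?_ ?_
      · rw [add_mul, ← hD1, smulmul, mul_assoc, ← orth_comm ho, ← mul_assoc, hQ, T_star, hT,
          smulmul, smul_smul, mul_comm c1, ← hcc]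
        abel
      · refine ⟨b + 1, b, c0, h1, h2, by omega, ?_, ?_⟩
        · rw [nu_add, nu_smul]
          refine dvd_add (dvd_add ?_ ?_) ?_
          · exact (pow_dvd_pow _ (by omega)).trans h4'
          · apply Dvd.dvd.mul_left
            rw [starsmul, mulsmul, Quaternion.re_smul, smul_eq_mul, add_comm, pow_add, hc1,
              mul_assoc]
            apply mul_dvd_mul_left
            apply Dvd.dvd.mul_left
            rw [star_mul, ← mul_assoc, re_comm, ← mul_assoc]
            apply dv_re
            apply dv_mulr
            refine key_dv pN (T := Tp p) (Q := Q1) ?_ ?_ hnQ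
            · rw [mul_assoc, ← hD1]; exact h5
            · rw [mul_assoc]; exact dv_mull hB' _
          · have hNQ : N ∣ nu Q := by rw [hQ, nu_mul, hT]; exact dvd_mul_left _ _
            rw [nu_mul, hc1, mul_pow, ← pow_mul, show b + 1 + b = b * 2 + 1 by ring, pow_succ]
            rw [mul_assoc]
            apply mul_dvd_mul_left
            apply Dvd.dvd.mul_left
            exact Dvd.dvd.mul_right hNQ _
        · rintro - ⟨-, hh⟩
          rw [add_mul] at hh
          have hh2 := dv_sub hh hB'
          rw [add_sub_cancel_left, smulmul, hc1, mul_smul, pow_succ,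
            dv_mul_smul (pow_ne_zero _ hN0)] at hh2
          have hh3 := dv_cancel1 pN h2 hh2
          have hh4 : dv (N ^ 1) (Q * io d) := by
            refine key_dv pN (T := Tp p) (Q := Q1) ?_ (by simpa using hh3) hnQ
            rw [mul_assoc, ← orth_comm ho, ← mul_assoc, hQ, T_star, hT, pow_one, smulmul]
            exact dv_smul dvd_rfl _
          rw [pow_one] at hh4
          have hh5 := dv_mulr hh4 (star (io d))
          rw [mul_assoc, mul_star_nu, mulsmul, mul_one, nu_io] at hh5
          refine h.qred N hi (dv_cancel1 pN ?_ hh5)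
          intro hdv
          have hne : Quaternion.normSq d ≠ 0 := by simpa using hd0
          have := natDegree_le_of_dvd hdv (by simpa using hne)
          simp [hdeg] at this
    · refine hfin 0 D1 (orth_zero p) ?_ ?_
      · rw [io_zero]; simpa using hD1
      · refine ⟨a + 1, b, c0, h1, h2, by omega, ?_, ?_⟩
        · exact (pow_dvd_pow _ (by omega)).trans h4'
        · rintro - ⟨-, hh⟩
          apply hB
          rw [hDQ, pow_succ' N (b + 1), dv_mul_smul hN0]
          exact hh
  · refine ⟨c1, Q * star (Tp p), D1, stepA h hm hi hT hcc hA hD1 ?_, p, 0, orth_zero p, ?_, ?_⟩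
    · refine ⟨a, min b a, c0, hc1, h2, by omega, ?_, ?_⟩
      · exact (pow_dvd_pow _ (by omega)).trans h4'
      · rintro hlt ⟨-, hh⟩
        have hmin : min b a = b := by omega
        rw [hmin] at hh
        apply h7 (by omega)
        rw [hD1, mul_assoc]
        simpa using hh
    · rw [smulmul, star_T, hT, smul_smul, hcc, mul_comm]
    · rw [io_zero]; simpa using hD1

theorem real_root {P : HX} {a : ℝ} (h : (X - C a) ∣ nu P) : dv (X - C a) P := by
  rw [dvd_iff_isRoot, IsRoot.def] at h
  simp only [nu, eval_add, eval_pow] at h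
  rw [dv_iff]
  simp only [dvd_iff_isRoot, IsRoot.def]
  refine ⟨?_, ?_, ?_, ?_⟩ <;> nlinarith

theorem stepG {c : ℝ[X]} {Q D : HX} (h : St c Q D) (hc : IsUnit c)
    (hP : ¬ IsUnit (nu (c • Q))) :
    ∃ c' Q' D', St c' Q' D' ∧ Rstep (c • Q) D (c' • Q') D' := by
  set P := c • Q with hPdef
  have hred : ∀ F : ℝ[X], Irreducible F → ¬ dv F P := by
    intro F hF hd
    refine h.qred F hF (dv_cancel1 hF.prime ?_ hd)
    exact fun h' => hF.not_isUnit (isUnit_of_dvd_unit h' hc)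
  have hmot : (P * star D).re = 0 := by
    rw [hPdef, smulmul, Quaternion.re_smul, h.mot, smul_zero]
  clear_value P
  obtain ⟨N, hm, hi, hN⟩ := exists_monic_irreducible_factor _ hP
  have hdeg : N.natDegree = 2 := natDegree_two hm hi (fun r hr => by
    subst hr
    exact hred _ hi (real_root hN))
  have hN0 : N ≠ 0 := hi.ne_zero
  obtain ⟨U, r, p, hr, hT, hU⟩ := lin_fac hm hdeg (hred N hi) hN
  obtain ⟨V, s1, s0, hV⟩ := quat_rem hm hdeg D
  obtain ⟨d, hd⟩ : ∃ d : Hq, r * d = -(s0 + s1 * p) :=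
    ⟨r⁻¹ * (-(s0 + s1 * p)), by rw [← mul_assoc, mul_inv_cancel₀ hr, one_mul]⟩
  have hS : (X : ℝ[X]) • io s1 + io s0 = io s1 * Tp p - io r * io d := by
    rw [← io_mul, hd, Tp_eq, mul_sub, mulsmul, mul_one, io_neg, io_add, io_mul]
    abel
  have hP1 : P = (U * star (Tp p) + io r) * Tp p := by
    rw [add_mul, star_T, hT, ← hU]
  rw [hS] at hV
  have ho : orth p d := by
    have e : N ∣ Quaternion.normSq r • (Tp p * star (io d)).re := by
      have e1 : P * star D = N • (U * star D) + (N • (io r * Tp p * star V)) +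
          N • (io r * star (io s1)) - io r * (Tp p * star (io d)) * star (io r) := by
        conv_lhs => rw [hU]
        rw [add_mul, smulmul]
        conv_lhs => arg 2; rw [hV]
        have e2 : star (N • V + (io s1 * Tp p - io r * io d)) = N • star V +
            (star (Tp p) * star (io s1) - star (io d) * star (io r)) := by
          rw [sub_eq_add_neg, staradd, staradd, starsmul, star_mul, starneg, star_mul,
            ← sub_eq_add_neg]
        rw [e2, mul_add, mulsmul, mul_sub]
        have e3 : io r * Tp p * (star (Tp p) * star (io s1)) = N • (io r * star (io s1)) := by
          rw [← mul_assoc, T_star, hT, smulmul]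
        rw [e3]
        simp only [mul_assoc]
        abel
      have e2 := hmot
      rw [e1, Quaternion.re_sub, re_conj, nu_io] at e2
      rw [smul_eq_C_mul, ← sub_eq_zero.1 e2]
      apply dv_re
      exact dv_add (dv_add (dv_smul dvd_rfl _) (dv_smul dvd_rfl _)) (dv_smul dvd_rfl _)
    have hn : Quaternion.normSq r ≠ 0 := by simpa using hr
    have e' : N ∣ (Tp p * star (io d)).re := by
      rw [smul_eq_C_mul] at e
      exact (IsUnit.dvd_mul_left (by simpa using hn)).1 e
    have e4 : (Tp p * star (io d)).re = C d.re * X +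
        C (-(p.re * d.re + p.imI * d.imI + p.imJ * d.imJ + p.imK * d.imK)) := by
      simp; ring
    rw [e4] at e'
    have e5 := eq_zero_of_dvd_of_natDegree_lt e' (by
      rw [hdeg]; exact lt_of_le_of_lt natDegree_linear_le (by norm_num))
    have e6 := congrArg (fun f => coeff f 1) e5
    have e7 := congrArg (fun f => coeff f 0) e5
    simp at e6 e7
    refine ⟨e6, ?_⟩
    rw [e6] at e7
    linarith
  set P1 := U * star (Tp p) + io r with hP1def
  have hD2 : D = (V * star (Tp p) + io s1 + U * io d) * Tp p - P1 * io d := by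
    rw [add_mul, add_mul, star_T, hT, hP1def, add_mul, mul_assoc U, mul_assoc U, orth_comm ho]
    conv_lhs => rw [hV]
    abel
  have hP0 : St 1 P D := by
    refine ⟨fun a ha => ?_, hred, fun F hF h1 => ?_, hmot, fun F hF iF => ?_⟩
    · exact (irreducible_X_sub_C a).not_isUnit (isUnit_of_dvd_one ha)
    · exact absurd (isUnit_of_dvd_one h1) hF.not_isUnit
    · exact ⟨0, 0, 1, by simp, fun h1 => iF.not_isUnit (isUnit_of_dvd_one h1), le_rfl,
        by simp, fun h => absurd h (lt_irrefl _)⟩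
  refine ⟨1, P1, V * star (Tp p) + io s1 + U * io d, ?_, p, d, ho, ?_, ?_⟩
  · refine stepB hP0 hm hi hT ho hP1 (by rw [one_smul]; exact hD2) ?_
    exact ⟨0, 0, 1, by simp, fun h1 => hi.not_isUnit (isUnit_of_dvd_one h1), le_rfl,
        by simp, fun h => absurd h (lt_irrefl _)⟩
  · rw [one_smul]; exact hP1
  · rw [one_smul]; exact hD2

/-- one step on the right or on the left -/
theorem step {c : ℝ[X]} {Q D : HX} (h : St c Q D) (hP : ¬ IsUnit (nu (c • Q))) :
    (∃ c' Q' D', St c' Q' D' ∧ Rstep (c • Q) D (c' • Q') D') ∨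
    (∃ c' Q' D', St c' Q' D' ∧ Rstep (star (c • Q)) (star D) (c' • Q') D') := by
  by_cases hc : IsUnit c
  · exact Or.inl (stepG h hc hP)
  obtain ⟨N, hm, hi, hN⟩ := exists_monic_irreducible_factor _ hc
  obtain ⟨a, b, c0, h1, h2, h3, h4, h5, h6, h7⟩ := W_strong (h.cond N hm hi)
  by_cases hR : b < a → ¬ dv (N ^ (b + 1)) (D * star Q)
  · exact Or.inl (stepR h hm hi hN h1 h2 h3 h4 h5 hR)
  · right
    rw [starsmul]
    push Not at hR
    refine stepR (St_star h) hm hi hN h1 h2 h3 (by rwa [nu_star]) ?_ ?_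
    · have := dv_star h6
      simpa using this
    · intro hb hh
      refine h7 hb ⟨?_, hR.2⟩
      have := dv_star hh
      simpa using this


/-- constructor -/
def mkq (a b c d : ℝ) : Hq := ⟨a, b, c, d⟩

@[simp] theorem mkq_re (a b c d : ℝ) : (mkq a b c d).re = a := rfl
@[simp] theorem mkq_imI (a b c d : ℝ) : (mkq a b c d).imI = b := rfl
@[simp] theorem mkq_imJ (a b c d : ℝ) : (mkq a b c d).imJ = c := rfl
@[simp] theorem mkq_imK (a b c d : ℝ) : (mkq a b c d).imK = d := rfl

/-- the isomorphism to quaternionic polynomials -/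
def ph (A : HX) : Hq[X] := qPoly A.re + qPoly A.imI * C (mkq 0 1 0 0) +
  qPoly A.imJ * C (mkq 0 0 1 0) + qPoly A.imK * C (mkq 0 0 0 1)

theorem negmul (a b : HX) : -a * b = -(a * b) := by
  ext1 <;> simp <;> ring

theorem mulneg (a b : HX) : a * -b = -(a * b) := by
  ext1 <;> simp <;> ring

theorem qPoly_coeff (f : ℝ[X]) (n : ℕ) : (qPoly f).coeff n = mkq (f.coeff n) 0 0 0 := by
  rw [qPoly, coeff_map]
  rfl

theorem ph_coeff (A : HX) (n : ℕ) : (ph A).coeff n =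
    mkq (A.re.coeff n) (A.imI.coeff n) (A.imJ.coeff n) (A.imK.coeff n) := by
  unfold ph
  simp only [coeff_add, coeff_mul_C, qPoly_coeff]
  ext1 <;> simp

theorem ph_inj {A B : HX} (h : ph A = ph B) : A = B := by
  have h1 : ∀ n, (ph A).coeff n = (ph B).coeff n := fun n => by rw [h]
  simp only [ph_coeff, Quaternion.ext_iff, mkq_re, mkq_imI, mkq_imJ, mkq_imK] at h1
  ext1 <;> ext n
  exacts [(h1 n).1, (h1 n).2.1, (h1 n).2.2.1, (h1 n).2.2.2]

theorem ph_add (A B : HX) : ph (A + B) = ph A + ph B := by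
  ext1 n
  rw [coeff_add, ph_coeff, ph_coeff, ph_coeff]
  ext1 <;> simp

theorem re_sumq {ι : Type*} (s : Finset ι) (f : ι → Hq) : (∑ i ∈ s, f i).re = ∑ i ∈ s, (f i).re := by
  classical
  induction s using Finset.induction_on with
  | empty => rfl
  | insert a s ha ih => rw [Finset.sum_insert ha, Finset.sum_insert ha, Quaternion.re_add, ih]
theorem imI_sumq {ι : Type*} (s : Finset ι) (f : ι → Hq) : (∑ i ∈ s, f i).imI = ∑ i ∈ s, (f i).imI := by
  classical
  induction s using Finset.induction_on with
  | empty => rfl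
  | insert a s ha ih => rw [Finset.sum_insert ha, Finset.sum_insert ha, Quaternion.imI_add, ih]
theorem imJ_sumq {ι : Type*} (s : Finset ι) (f : ι → Hq) : (∑ i ∈ s, f i).imJ = ∑ i ∈ s, (f i).imJ := by
  classical
  induction s using Finset.induction_on with
  | empty => rfl
  | insert a s ha ih => rw [Finset.sum_insert ha, Finset.sum_insert ha, Quaternion.imJ_add, ih]
theorem imK_sumq {ι : Type*} (s : Finset ι) (f : ι → Hq) : (∑ i ∈ s, f i).imK = ∑ i ∈ s, (f i).imK := by
  classical
  induction s using Finset.induction_on with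
  | empty => rfl
  | insert a s ha ih => rw [Finset.sum_insert ha, Finset.sum_insert ha, Quaternion.imK_add, ih]

theorem ph_mul (A B : HX) : ph (A * B) = ph A * ph B := by
  ext1 n
  rw [coeff_mul, ph_coeff]
  simp only [ph_coeff]
  ext1
  · rw [re_sumq]
    simp [coeff_mul, Finset.sum_add_distrib, Finset.sum_sub_distrib]
  · rw [imI_sumq]
    simp [coeff_mul, Finset.sum_add_distrib, Finset.sum_sub_distrib]
  · rw [imJ_sumq]
    simp [coeff_mul, Finset.sum_add_distrib, Finset.sum_sub_distrib]
  · rw [imK_sumq]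
    simp [coeff_mul, Finset.sum_add_distrib, Finset.sum_sub_distrib]

theorem ph_neg (A : HX) : ph (-A) = -ph A := by
  ext1 n
  rw [coeff_neg, ph_coeff, ph_coeff]
  ext1 <;> simp

theorem ph_smul (f : ℝ[X]) (A : HX) : ph (f • A) = qPoly f * ph A := by
  have : qPoly f = ph (f • (1 : HX)) := by
    ext1 n
    rw [ph_coeff, qPoly_coeff]
    ext1 <;> simp
  rw [this, ← ph_mul, smulmul, one_mul]

theorem ph_io (p : Hq) : ph (io p) = C p := by
  ext1 n
  rw [ph_coeff, coeff_C]
  split_ifs with h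
  · subst h; ext1 <;> simp
  · ext1 <;> simp [coeff_C, h] <;> rfl

theorem ph_one : ph 1 = 1 := by
  have : (1 : HX) = io 1 := by
    ext1
    exacts [C_1.symm, C_0.symm, C_0.symm, C_0.symm]
  rw [this, ph_io, C_1]

theorem ph_real (f : ℝ[X]) : ph (f • (1 : HX)) = qPoly f := by
  rw [ph_smul, ph_one, mul_one]

theorem ph_Tp (p : Hq) : ph (Tp p) = X - C p := by
  rw [Tp_eq, sub_eq_add_neg, ph_add, ph_neg, ph_io, ph_real, ← sub_eq_add_neg]
  simp [qPoly]

theorem ph_surj (P : Hq[X]) : ∃ A : HX, ph A = P := by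
  induction P using Polynomial.induction_on' with
  | add p q hp hq =>
    obtain ⟨A, rfl⟩ := hp
    obtain ⟨B, rfl⟩ := hq
    exact ⟨A + B, ph_add _ _⟩
  | monomial n a =>
    refine ⟨(X ^ n : ℝ[X]) • io a, ?_⟩
    rw [ph_smul, ph_io, qPoly, Polynomial.map_pow, map_X, ← C_mul_X_pow_eq_monomial, X_pow_mul]

theorem cstar_coeff {R : Type*} [Semiring R] [Star R] (h0 : star (0 : R) = 0) (A : R[X]) (n : ℕ) :
    (cstar A).coeff n = star (A.coeff n) := by
  unfold cstar
  rw [Polynomial.sum_def, finsetSum_coeff]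
  simp only [coeff_C_mul, coeff_X_pow, mul_ite, mul_one, mul_zero]
  rw [Finset.sum_ite_eq]
  split_ifs with h
  · rfl
  · rw [notMem_support_iff.1 h, h0]

theorem ph_star (A : HX) : ph (star A) = cstar (ph A) := by
  ext1 n
  rw [cstar_coeff (star_zero _), ph_coeff, ph_coeff]
  ext1 <;> simp

theorem dv_of_RDvdQ {f : ℝ[X]} {A : HX} (h : RDvdQ f (ph A)) : dv f A := by
  obtain ⟨B, hB⟩ := h
  obtain ⟨B, rfl⟩ := ph_surj B
  rw [← ph_smul] at hB
  exact ⟨B, ph_inj hB⟩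

theorem RDvdQ_of_dv {f : ℝ[X]} {A : HX} (h : dv f A) : RDvdQ f (ph A) := by
  obtain ⟨B, rfl⟩ := h
  exact ⟨ph B, ph_smul _ _⟩

theorem dhQ_mul (A B : Hq[X]) : dhQ (A * B) = dhQ A * dhQ B := Polynomial.map_mul _
theorem dhQ_add (A B : Hq[X]) : dhQ (A + B) = dhQ A + dhQ B := Polynomial.map_add _

theorem mp_coeff (P D : Hq[X]) (n : ℕ) : (mp P D).coeff n = inl (P.coeff n) + inr (D.coeff n) := by
  simp only [mp, dhQ, coeff_add, coeff_C_mul, coeff_map]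
  ext <;> simp

theorem mp_inj {P D P' D' : Hq[X]} (h : mp P D = mp P' D') : P = P' ∧ D = D' := by
  have h1 : ∀ n, (mp P D).coeff n = (mp P' D').coeff n := fun n => by rw [h]
  simp only [mp_coeff] at h1
  constructor
  · ext1 n
    simpa using congrArg TrivSqZeroExt.fst (h1 n)
  · ext1 n
    simpa using congrArg TrivSqZeroExt.snd (h1 n)

theorem eps_comm (A : Hq[X]) : dhQ A * C (ε : DHq) = C ε * dhQ A := by
  ext1 n
  simp only [dhQ, coeff_C_mul, coeff_mul_C, coeff_map]
  ext <;> simp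

theorem mp_mul (P D P' D' : Hq[X]) : mp P D * mp P' D' = mp (P * P') (P * D' + D * P') := by
  have h0 : (C (ε : DHq)) * C ε = 0 := by
    rw [← C_mul, DualNumber.eps_mul_eps, C_0]
  have h1 : C (ε : DHq) * dhQ D * (C ε * dhQ D') = 0 := by
    rw [mul_assoc, ← mul_assoc (dhQ D), eps_comm, mul_assoc, ← mul_assoc, h0, zero_mul]
  unfold mp
  rw [add_mul, mul_add, mul_add, h1, dhQ_mul, dhQ_add, dhQ_mul, dhQ_mul, mul_add,
    ← mul_assoc (dhQ P), eps_comm]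
  simp only [mul_assoc]
  abel

theorem star_DHq_zero : star (0 : DHq) = 0 := by
  change inl (star (0 : DHq).fst) + inr (star (0 : DHq).snd) = (0 : DHq)
  ext <;> simp

theorem cstar_mp (P D : Hq[X]) : cstar (mp P D) = mp (cstar P) (cstar D) := by
  ext1 n
  rw [cstar_coeff star_DHq_zero, mp_coeff, mp_coeff, cstar_coeff (star_zero _),
    cstar_coeff (star_zero _)]
  change inl (star (inl (P.coeff n) + inr (D.coeff n) : DHq).fst) +
    inr (star (inl (P.coeff n) + inr (D.coeff n) : DHq).snd) = _
  simp

/-- dual quaternion polynomial from its parts -/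
def MP (A B : HX) : DHq[X] := mp (ph A) (ph B)

theorem MP_mul (A B A' B' : HX) : MP A B * MP A' B' = MP (A * A') (A * B' + B * A') := by
  unfold MP
  rw [mp_mul, ph_add, ph_mul, ph_mul, ph_mul]

theorem MP_star (A B : HX) : cstar (MP A B) = MP (star A) (star B) := by
  unfold MP
  rw [cstar_mp, ph_star, ph_star]

theorem MP_surj (M : DHq[X]) : ∃ A B, M = MP A B := by
  induction M using Polynomial.induction_on' with
  | add p q hp hq =>
    obtain ⟨A, B, rfl⟩ := hp
    obtain ⟨A', B', rfl⟩ := hq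
    refine ⟨A + A', B + B', ?_⟩
    ext1 n
    simp only [MP, mp_coeff, coeff_add, ph_add]
    ext <;> simp
  | monomial n a =>
    obtain ⟨A, hA⟩ := ph_surj (monomial n a.fst)
    obtain ⟨B, hB⟩ := ph_surj (monomial n a.snd)
    refine ⟨A, B, ?_⟩
    ext1 m
    simp only [MP, mp_coeff, hA, hB, coeff_monomial]
    split_ifs <;> ext <;> simp

theorem MP_real (f : ℝ[X]) : dPoly f = MP (f • (1 : HX)) 0 := by
  have h0 : ph 0 = 0 := by
    rw [← io_zero, ph_io, C_0]
  simp [MP, h0, ph_real, mp, dPoly, dhQ]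

theorem MP_inj {A B A' B' : HX} (h : MP A B = MP A' B') : A = A' ∧ B = B' :=
  ⟨ph_inj (mp_inj h).1, ph_inj (mp_inj h).2⟩

theorem MP_lin (p d : Hq) : (X - C (inl p + inr d : DHq)) = MP (Tp p) (-io d) := by
  unfold MP
  rw [ph_Tp, ph_neg, ph_io]
  ext1 n
  rw [mp_coeff]
  simp only [coeff_sub, coeff_X, coeff_C, coeff_neg]
  split_ifs <;> ext <;> simp

theorem cstar_mul' (A B : DHq[X]) : cstar (A * B) = cstar B * cstar A := by
  obtain ⟨a, a', rfl⟩ := MP_surj A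
  obtain ⟨b, b', rfl⟩ := MP_surj B
  rw [MP_mul, MP_star, MP_star, MP_star, MP_mul, star_mul, staradd, star_mul, star_mul, add_comm]

theorem cstar_cstar (A : DHq[X]) : cstar (cstar A) = A := by
  obtain ⟨a, a', rfl⟩ := MP_surj A
  rw [MP_star, MP_star, star_star, star_star]

theorem lin_motion {p d : Hq} (h : orth p d) : IsMotion (X - C (inl p + inr d : DHq)) := by
  refine ⟨nu (Tp p), (nu_Tp_monic p).ne_zero, ?_⟩
  rw [MP_lin, MP_star, MP_mul, MP_real, mul_star_nu, starneg, orth_star h, neg_neg, negmul,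
    orth_comm' h, add_neg_cancel]

theorem HasLinFact.mul {M : DHq[X]} (h : HasLinFact M) {p d : Hq} (ho : orth p d) :
    HasLinFact (M * (X - C (inl p + inr d : DHq))) := by
  obtain ⟨L, h1, h2⟩ := h
  refine ⟨L ++ [inl p + inr d], ?_, ?_⟩
  · intro x hx
    rw [List.mem_append, List.mem_singleton] at hx
    rcases hx with hx | rfl
    · exact h1 x hx
    · exact lin_motion ho
  · rw [h2]; simp

theorem cstar_lin (h : DHq) : cstar (X - C h : DHq[X]) = X - C (star h) := by
  have e : h = inl h.fst + inr h.snd := by ext <;> simp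
  have e' : star h = inl (star h.fst) + inr (star h.snd) := rfl
  rw [e', e, MP_lin, MP_star, MP_lin, Tp_star, starneg, io_star]
  simp

theorem cstar_one : cstar (1 : DHq[X]) = 1 := by
  have h1 : (1 : DHq[X]) = MP 1 0 := by
    have := MP_real 1
    rw [one_smul] at this
    rw [← this]
    simp [dPoly, dhQ, qPoly]
  rw [h1, MP_star]
  congr 1
  · ext1 <;> simp
  · ext1 <;> simp

theorem comm_real (f : ℝ[X]) (A : DHq[X]) : dPoly f * A = A * dPoly f := by
  obtain ⟨a, a', rfl⟩ := MP_surj A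
  rw [MP_real, MP_mul, MP_mul]
  simp [smulmul, mulsmul]

theorem motion_star {M : DHq[X]} (h : IsMotion M) (hm : M.Monic) : IsMotion (cstar M) := by
  obtain ⟨f, hf, h⟩ := h
  refine ⟨f, hf, ?_⟩
  rw [cstar_cstar]
  have : M * (cstar M * M) = M * dPoly f := by rw [← mul_assoc, h, comm_real]
  exact hm.isRegular.left this

theorem HasLinFact.star {M : DHq[X]} (h : HasLinFact M) : HasLinFact (cstar M) := by
  obtain ⟨L, h1, h2⟩ := h
  induction L generalizing M with
  | nil =>
    refine ⟨[], by simp, ?_⟩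
    rw [h2]; simp [cstar_one]
  | cons x L ih =>
    obtain ⟨L', h3, h4⟩ := ih (M := (L.map fun h => Polynomial.X - Polynomial.C h).prod)
      (fun y hy => h1 y (List.mem_cons_of_mem _ hy)) rfl
    refine ⟨L' ++ [Star.star x], ?_, ?_⟩
    · intro y hy
      rw [List.mem_append, List.mem_singleton] at hy
      rcases hy with hy | rfl
      · exact h3 y hy
      · rw [← cstar_lin]
        exact motion_star (h1 x (by simp)) (monic_X_sub_C _)
    · rw [h2, List.map_cons, List.prod_cons, cstar_mul', h4, cstar_lin]
      simp

theorem monic_cstar {M : DHq[X]} (h : M.Monic) :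
    (cstar M).Monic ∧ (cstar M).natDegree = M.natDegree := by
  have hs : (star (1 : DHq)) = 1 := by
    change inl (star (1 : DHq).fst) + inr (star (1 : DHq).snd) = (1 : DHq)
    ext <;> simp
  have h1 : (cstar M).natDegree ≤ M.natDegree := by
    rw [natDegree_le_iff_coeff_eq_zero]
    intro n hn
    rw [cstar_coeff star_DHq_zero, coeff_eq_zero_of_natDegree_lt hn, star_DHq_zero]
  have h2 : (cstar M).coeff M.natDegree = 1 := by
    rw [cstar_coeff star_DHq_zero, h.coeff_natDegree, hs]
  have h3 : (cstar M).natDegree = M.natDegree :=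
    le_antisymm h1 (le_natDegree_of_ne_zero (by rw [h2]; exact one_ne_zero))
  exact ⟨by rw [Monic, leadingCoeff, h3, h2], h3⟩

theorem main_fact (n : ℕ) : ∀ (c : ℝ[X]) (Q D : HX), St c Q D → (MP (c • Q) D).Monic →
    (MP (c • Q) D).natDegree = n → HasLinFact (MP (c • Q) D) := by
  induction n with
  | zero =>
    intro c Q D _ hm hd
    refine ⟨[], by simp, ?_⟩
    rw [eq_one_of_monic_natDegree_zero hm hd]
    simp
  | succ n ih =>
    intro c Q D h hm hd
    have key : ∀ P E : HX, (MP P E).Monic → (MP P E).natDegree = n + 1 →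
        (∃ c' Q' D', St c' Q' D' ∧ Rstep P E (c' • Q') D') → HasLinFact (MP P E) := by
      rintro P E hm hd ⟨c', Q', D', hS, p, d, ho, hP, hE⟩
      have e : MP P E = MP (c' • Q') D' * (X - C (inl p + inr d : DHq)) := by
        rw [MP_lin, MP_mul, ← hP, hE, mulneg, neg_add_eq_sub]
      rw [e] at hm hd ⊢
      have hm' := (monic_X_sub_C _).of_mul_monic_right hm
      apply HasLinFact.mul _ ho
      apply ih c' Q' D' hS hm'
      rw [hm'.natDegree_mul (monic_X_sub_C _), natDegree_X_sub_C] at hd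
      omega
    have hnu : ¬ IsUnit (nu (c • Q)) := by
      intro hu
      have e : MP (c • Q) D * cstar (MP (c • Q) D) = dPoly (nu (c • Q)) := by
        rw [MP_star, MP_mul, MP_real, mul_star_nu]
        congr 1
        have h0 := h.mot
        have e1 : (c • Q) * star D + D * star (c • Q) = (2 * (c * (Q * star D).re)) • (1 : HX) := by
          rw [starsmul, smulmul, mulsmul]
          ext1 <;> simp <;> ring
        rw [e1, h0, mul_zero, mul_zero]
        ext1 <;> simp <;> rfl
      have h1 := congrArg natDegree e
      have h2 := monic_cstar hm
      rw [hm.natDegree_mul h2.1, h2.2, hd] at h1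
      have h3 : (dPoly (nu (c • Q))).natDegree ≤ 0 := by
        refine (natDegree_map_le).trans ((natDegree_map_le).trans ?_)
        exact (natDegree_eq_zero_of_isUnit hu).le
      omega
    rcases step h hnu with hs | hs
    · exact key _ _ hm hd hs
    · rw [← cstar_cstar (MP (c • Q) D)]
      apply HasLinFact.star
      rw [MP_star]
      have h2 := monic_cstar hm
      rw [MP_star] at h2
      exact key _ _ h2.1 (h2.2.trans hd) hs


theorem primal_mp (P D : Hq[X]) : primal (mp P D) = P := by
  ext1 n
  rw [primal, coeff_map, mp_coeff]
  simp

theorem dv_re_zero {c : ℝ[X]} (hc : c ≠ 0) {Q D : HX} {f : ℝ[X]}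
    (h : MP (c • Q) D * cstar (MP (c • Q) D) = dPoly f) : (Q * star D).re = 0 := by
  rw [MP_star, MP_mul, MP_real] at h
  have h1 := (MP_inj h).2
  have e1 : (c • Q) * star D + D * star (c • Q) = (2 * (c * (Q * star D).re)) • (1 : HX) := by
    rw [starsmul, smulmul, mulsmul]
    ext1 <;> simp <;> ring
  rw [e1] at h1
  have h2 : 2 * (c * (Q * star D).re) = 0 := by
    have := congrArg (fun A : HX => A.re) h1
    simp only [Quaternion.re_smul, one_reX, smul_eq_mul, mul_one] at this
    exact this
  rcases mul_eq_zero.1 h2 with h3 | h3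
  · exact absurd h3 two_ne_zero
  · exact (mul_eq_zero.1 h3).resolve_left hc

theorem irr_monic {F : ℝ[X]} (hF : Irreducible F) :
    ∃ G : ℝ[X], G.Monic ∧ G ≠ 1 ∧ G ∣ F := by
  obtain ⟨G, h1, h2, h3⟩ := exists_monic_irreducible_factor F hF.not_isUnit
  exact ⟨G, h1, fun h => h2.not_isUnit (h ▸ isUnit_one), h3⟩

theorem final_aux (c : ℝ[X]) (Q D : HX) (g : ℝ[X])
    (hmonic : (MP (c • Q) D).Monic) (hmotion : IsMotion (MP (c • Q) D))
    (hred : ReducedD (MP (c • Q) D)) (hbdd : BoundedD (MP (c • Q) D)) (hQred : ReducedQ (ph Q))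
    (hg : IsMrpf3 g c (cstar (ph Q) * ph D) (ph D * cstar (ph Q)))
    (hcg : RDvdQ (c * g) (ph D * cstar (ph D))) :
    HasLinFact (MP (c • Q) D) := by
  have hno : ∀ a : ℝ, ¬ (X - C a) ∣ c := by
    intro a ha
    apply hbdd a
    unfold MP
    rw [primal_mp]
    exact RDvdQ_of_dv (dv_smul ha Q)
  have hc : c ≠ 0 := by
    rintro rfl
    exact hno 0 (dvd_zero _)
  rw [← ph_star, ← ph_mul, ← ph_mul] at hg
  rw [← ph_star, ← ph_mul] at hcg
  obtain ⟨gm, gc, -, -, gmax⟩ := hg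
  have hnu : c * g ∣ nu D := by
    have := dv_re (dv_of_RDvdQ hcg)
    rw [mul_star_nu] at this
    simpa only [Quaternion.re_smul, one_reX, smul_eq_mul, mul_one] using this
  refine main_fact _ c Q D ⟨hno, ?_, ?_, ?_, ?_⟩ hmonic rfl
  · intro F hF hd
    obtain ⟨G, h1, h2, h3⟩ := irr_monic hF
    exact h2 (hQred G h1 (RDvdQ_of_dv (dv_trans h3 hd)))
  · intro F hF hFc hd
    obtain ⟨G, h1, h2, h3⟩ := irr_monic hF
    apply h2
    apply hred G h1
    obtain ⟨c1, hc1⟩ := h3.trans hFc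
    obtain ⟨D1, hD1⟩ := dv_trans h3 hd
    refine ⟨MP (c1 • Q) D1, ?_⟩
    rw [MP_real, MP_mul, hc1, hD1, smulmul, smulmul, one_mul, one_mul, mul_smul]
    congr 1
    ext1 <;> simp
  · obtain ⟨f, -, hf⟩ := hmotion
    exact dv_re_zero hc hf
  · intro N hN hi
    have hp := hi.prime
    obtain ⟨c0, h1, h2⟩ := (FiniteMultiplicity.of_not_isUnit hi.not_isUnit hc).exists_eq_pow_mul_and_not_dvd
    obtain ⟨g0, h3, h4⟩ :=
      (FiniteMultiplicity.of_not_isUnit hi.not_isUnit gm.ne_zero).exists_eq_pow_mul_and_not_dvd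
    generalize multiplicity N c = a at h1
    generalize multiplicity N g = b at h3
    refine ⟨a, b, c0, h1, h2, ?_, ?_, ?_⟩
    · by_contra hab
      apply h2
      have h5 : N ^ a * N ∣ N ^ a * c0 := by
        rw [← h1, ← pow_succ]
        refine (pow_dvd_pow N (show a + 1 ≤ b by omega)).trans (Dvd.dvd.trans ?_ gc)
        exact ⟨g0, h3⟩
      exact (mul_dvd_mul_iff_left (pow_ne_zero _ hi.ne_zero)).1 h5
    · refine Dvd.dvd.trans ?_ hnu
      rw [pow_add]
      exact mul_dvd_mul ⟨c0, h1⟩ ⟨g0, h3⟩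
    · rintro hb ⟨h5, h6⟩
      have h7 := gmax (N ^ (b + 1)) (hN.pow _) ((pow_dvd_pow N (by omega)).trans ⟨c0, h1⟩)
        (RDvdQ_of_dv h5) (RDvdQ_of_dv h6)
      apply h4
      rw [h3, pow_succ] at h7
      exact (mul_dvd_mul_iff_left (pow_ne_zero _ hi.ne_zero)).1 h7


end

/-- Sufficiency: if `c·g` divides `D·D*`, then the bounded monic reduced motion polynomial
`M = cQ + εD` with reduced `Q` admits a factorization into monic linear motion polynomial
factors. -/
theorem final_characterization_sufficiency
    (c : ℝ[X]) (Q D : Hq[X]) (g : ℝ[X]) (M : DHq[X])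
    (hM : M = mp (qPoly c * Q) D)
    (hmonic : M.Monic) (hmotion : IsMotion M)
    (hred : ReducedD M) (hbdd : BoundedD M) (hQred : ReducedQ Q)
    (hg : IsMrpf3 g c (cstar Q * D) (D * cstar Q))
    (hcg : RDvdQ (c * g) (D * cstar D)) :
    HasLinFact M := by
  obtain ⟨Q, rfl⟩ := ph_surj Q
  obtain ⟨D, rfl⟩ := ph_surj D
  have e : mp (qPoly c * ph Q) (ph D) = MP (c • Q) D := by
    rw [MP, ph_smul]
  rw [e] at hM
  subst hM
  exact final_aux c Q D g hmonic hmotion hred hbdd hQred hg hcg
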